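/- Let n ≥ 2, A the Cartan matrix of type C_n, and ι an admissible sequence adapted to A. Then the type C boxes satisfy: (1) B^C_s(j+1) = B^C_s(j) − β_{s+P(j),j} for 1 ≤ j ≤ n−1 and s ≥ 1 − P(j); (2) B^C_s(n̄) = B^C_s(n) − 2β_{s+P(n),n} for s ≥ 1 − P(n); (3) B^C_s(ovl(j−1)) = B^C_s(j̄) − β_{s+P(j−1)+n−j+1, j−1} for 2 ≤ j ≤ n and s ≥ j − P(j−1) − n; (4) B^C_{l+1}(ovl(n+1)) + B^C_l(n̄) = B^C_l(ovl(n+1)) − β_{l+P(n), n} for l ≥ 1 − P(n). -/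

import Mathlib

noncomputable section

/-- The coordinate linear form `x_k` (as a coefficient vector). -/
def xc (k : ℕ) : ℕ → ℚ := fun l => if l = k then 1 else 0

/-- Cartan matrix of type `A_n`. -/
def cartanA (_n : ℕ) (i j : ℕ) : ℤ :=
  if i = j then 2 else if i + 1 = j ∨ j + 1 = i then -1 else 0

/-- Cartan matrix of type `B_n`. -/
def cartanB (n : ℕ) (i j : ℕ) : ℤ :=
  if i = j then 2
  else if i = n ∧ j = n - 1 then -2
  else if i + 1 = j ∨ j + 1 = i then -1 else 0

/-- Cartan matrix of type `C_n`. -/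
def cartanC (n : ℕ) (i j : ℕ) : ℤ :=
  if i = j then 2
  else if i = n - 1 ∧ j = n then -2
  else if i + 1 = j ∨ j + 1 = i then -1 else 0

/-- Cartan matrix of type `D_n`. -/
def cartanD (n : ℕ) (i j : ℕ) : ℤ :=
  if i = j then 2
  else if (i = n - 1 ∧ j = n) ∨ (i = n ∧ j = n - 1) then 0
  else if (i + 1 = j ∨ j + 1 = i) ∨ (i = n ∧ j = n - 2) ∨ (i = n - 2 ∧ j = n) then -1
  else 0

/-- `ι` (with positions indexed by `k ≥ 1`) takes values in `{1,…,n}`, has no two equal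
consecutive entries, and every index occurs infinitely often. -/
def Admissible (n : ℕ) (ι : ℕ → ℕ) : Prop :=
  (∀ k, 1 ≤ k → 1 ≤ ι k ∧ ι k ≤ n) ∧
  (∀ k, 1 ≤ k → ι k ≠ ι (k + 1)) ∧
  (∀ i, 1 ≤ i → i ≤ n → ∀ N, ∃ k, N ≤ k ∧ ι k = i)

/-- `k^+`: the next position after `k` carrying the same letter. -/
def kplus (ι : ℕ → ℕ) (k : ℕ) : ℕ := sInf {l | k < l ∧ ι l = ι k}

/-- `k^-`: the previous position (`≥ 1`) carrying the same letter, `0` if none. -/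
def kminus (ι : ℕ → ℕ) (k : ℕ) : ℕ := sSup {l | 0 < l ∧ l < k ∧ ι l = ι k}

/-- The linear form `β_k` (with `β_0 = 0`). -/
def beta (A : ℕ → ℕ → ℤ) (ι : ℕ → ℕ) (k : ℕ) : ℕ → ℚ :=
  if k = 0 then 0
  else xc k + (∑ j ∈ Finset.Ioo k (kplus ι k), (A (ι k) (ι j) : ℚ) • xc j) + xc (kplus ι k)

/-- The piecewise-linear operator `S_k`. -/
def Sop (A : ℕ → ℕ → ℤ) (ι : ℕ → ℕ) (k : ℕ) (φ : ℕ → ℚ) : ℕ → ℚ :=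
  if 0 < φ k then φ - φ k • beta A ι k
  else φ - φ k • beta A ι (kminus ι k)

/-- Membership in `Ξ_ι`: forms obtained from some `x_{j_0}` by finitely many operators `S_k`. -/
inductive XiMem (A : ℕ → ℕ → ℤ) (ι : ℕ → ℕ) : (ℕ → ℚ) → Prop
  | base (k : ℕ) (hk : 1 ≤ k) : XiMem A ι (xc k)
  | step (k : ℕ) (hk : 1 ≤ k) (φ : ℕ → ℚ) (h : XiMem A ι φ) : XiMem A ι (Sop A ι k φ)

/-- The set `Ξ_ι`. -/
def Xi (A : ℕ → ℕ → ℤ) (ι : ℕ → ℕ) : Set (ℕ → ℚ) := { φ | XiMem A ι φ }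

/-- Forms obtained from a set `g` of generators by finitely many operators `S_k`. -/
inductive XiMemFrom (A : ℕ → ℕ → ℤ) (ι : ℕ → ℕ) (g : Set (ℕ → ℚ)) : (ℕ → ℚ) → Prop
  | base (φ : ℕ → ℚ) (h : φ ∈ g) : XiMemFrom A ι g φ
  | step (k : ℕ) (hk : 1 ≤ k) (φ : ℕ → ℚ) (h : XiMemFrom A ι g φ) :
      XiMemFrom A ι g (Sop A ι k φ)

/-- `ι` is adapted to the Cartan matrix `A`: for `i ≠ j` with `a_{i,j} ≠ 0`, consecutive
members of the subsequence of `ι` consisting of the letters `i`, `j` are distinct. -/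
def Adapted (n : ℕ) (A : ℕ → ℕ → ℤ) (ι : ℕ → ℕ) : Prop :=
  ∀ i j, 1 ≤ i → i ≤ n → 1 ≤ j → j ≤ n → i ≠ j → A i j ≠ 0 →
    ∀ k l, 1 ≤ k → k < l → (ι k = i ∨ ι k = j) → (ι l = i ∨ ι l = j) →
      (∀ m, k < m → m < l → ι m ≠ i ∧ ι m ≠ j) → ι k ≠ ι l

/-- Position of the first occurrence of the letter `i` in `ι`. -/
def firstOcc (ι : ℕ → ℕ) (i : ℕ) : ℕ := sInf {k | 1 ≤ k ∧ ι k = i}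

/-- `p_{i,j} = 1` iff the first occurrence of `i` precedes the first occurrence of `j`. -/
def pval (ι : ℕ → ℕ) (i j : ℕ) : ℕ := if firstOcc ι i < firstOcc ι j then 1 else 0

/-- The function `P(k)` for types A, B, C (and `P(k) = 0` for `k > n`, `k ≤ 1`). -/
def PABC (ι : ℕ → ℕ) (n k : ℕ) : ℕ :=
  if k ≤ n then ∑ t ∈ Finset.Icc 2 k, pval ι t (t - 1) else 0

/-- The function `P(k)` for type D. -/
def PD (ι : ℕ → ℕ) (n k : ℕ) : ℕ :=
  if k = n then (∑ t ∈ Finset.Icc 2 (n - 2), pval ι t (t - 1)) + pval ι n (n - 2)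
  else if k ≤ n then ∑ t ∈ Finset.Icc 2 k, pval ι t (t - 1) else 0

/-- `occPos ι j s`: the position of the `s`-th occurrence of the letter `j` in `ι`
(`0` for `s = 0`). -/
def occPos (ι : ℕ → ℕ) (j : ℕ) : ℕ → ℕ
  | 0 => 0
  | s + 1 => sInf {k | occPos ι j s < k ∧ ι k = j}

/-- The double-indexed coordinate form `x_{s,j}`, with the conventions
`x_{s,0} = x_{s,n+1} = 0` and `x_{s,j} = 0` for `s ≤ 0`. -/
def xsj (ι : ℕ → ℕ) (n : ℕ) (s : ℤ) (j : ℕ) : ℕ → ℚ :=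
  if 1 ≤ s ∧ 1 ≤ j ∧ j ≤ n then xc (occPos ι j s.toNat) else 0

/-- The double-indexed form `β_{s,j}`. -/
def betasj (A : ℕ → ℕ → ℤ) (ι : ℕ → ℕ) (s : ℤ) (j : ℕ) : ℕ → ℚ :=
  beta A ι (occPos ι j s.toNat)

/-- The double-indexed operator `S_{m,j}`. -/
def Ssj (A : ℕ → ℕ → ℤ) (ι : ℕ → ℕ) (m j : ℕ) (φ : ℕ → ℚ) : ℕ → ℚ :=
  Sop A ι (occPos ι j m) φ

/- Entries of the ordered sets `J_X` are encoded as natural numbers: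
an unbarred entry `j ∈ {1,…,n}` is encoded as `j`, a barred entry `j̄` is
encoded as `2n+1-j` (so that `n̄ = n+1, …, 1̄ = 2n` and the total order of
`J_B = J_C` is the numerical order), and the extra symbol `ovl(n+1)` of
types C and D is encoded as `0`. -/

/-- The box of type A. -/
def boxA (ι : ℕ → ℕ) (n : ℕ) (s : ℤ) (j : ℕ) : ℕ → ℚ :=
  xsj ι n (s + (PABC ι n j : ℤ)) j - xsj ι n (s + (PABC ι n (j - 1) : ℤ) + 1) (j - 1)

/-- The box of type B. -/
def boxB (ι : ℕ → ℕ) (n : ℕ) (s : ℤ) (e : ℕ) : ℕ → ℚ :=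
  if e ≤ n then
    xsj ι n (s + (PABC ι n e : ℤ)) e - xsj ι n (s + (PABC ι n (e - 1) : ℤ) + 1) (e - 1)
  else
    xsj ι n (s + (PABC ι n (2 * n - e) : ℤ) + (n : ℤ) - ((2 * n + 1 - e : ℕ) : ℤ) + 1)
        (2 * n - e)
      - xsj ι n (s + (PABC ι n (2 * n + 1 - e) : ℤ) + (n : ℤ) - ((2 * n + 1 - e : ℕ) : ℤ) + 1)
          (2 * n + 1 - e)

/-- The box of type C (`ovl(n+1)` encoded as `0`). -/
def boxC (ι : ℕ → ℕ) (n : ℕ) (s : ℤ) (e : ℕ) : ℕ → ℚ :=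
  if e = 0 then xsj ι n (s + (PABC ι n n : ℤ)) n
  else if e < n then
    xsj ι n (s + (PABC ι n e : ℤ)) e - xsj ι n (s + (PABC ι n (e - 1) : ℤ) + 1) (e - 1)
  else if e = n then
    (2 : ℚ) • xsj ι n (s + (PABC ι n n : ℤ)) n
      - xsj ι n (s + (PABC ι n (n - 1) : ℤ) + 1) (n - 1)
  else if e = n + 1 then
    xsj ι n (s + (PABC ι n (n - 1) : ℤ) + 1) (n - 1)
      - (2 : ℚ) • xsj ι n (s + (PABC ι n n : ℤ) + 1) n
  else
    xsj ι n (s + (PABC ι n (2 * n - e) : ℤ) + (n : ℤ) - ((2 * n + 1 - e : ℕ) : ℤ) + 1)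
        (2 * n - e)
      - xsj ι n (s + (PABC ι n (2 * n + 1 - e) : ℤ) + (n : ℤ) - ((2 * n + 1 - e : ℕ) : ℤ) + 1)
          (2 * n + 1 - e)

/-- The box of type D (`ovl(n+1)` encoded as `0`, `n̄` as `n+1`, `ovl(n-1)` as `n+2`). -/
def boxD (ι : ℕ → ℕ) (n : ℕ) (s : ℤ) (e : ℕ) : ℕ → ℚ :=
  if e = 0 then xsj ι n (s + (PD ι n n : ℤ)) n
  else if e ≤ n - 2 then
    xsj ι n (s + (PD ι n e : ℤ)) e - xsj ι n (s + (PD ι n (e - 1) : ℤ) + 1) (e - 1)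
  else if e = n - 1 then
    xsj ι n (s + (PD ι n (n - 1) : ℤ)) (n - 1) + xsj ι n (s + (PD ι n n : ℤ)) n
      - xsj ι n (s + (PD ι n (n - 2) : ℤ) + 1) (n - 2)
  else if e = n then
    xsj ι n (s + (PD ι n n : ℤ)) n - xsj ι n (s + (PD ι n (n - 1) : ℤ) + 1) (n - 1)
  else if e = n + 1 then
    xsj ι n (s + (PD ι n (n - 1) : ℤ)) (n - 1) - xsj ι n (s + (PD ι n n : ℤ) + 1) n
  else if e = n + 2 then
    xsj ι n (s + (PD ι n (n - 2) : ℤ) + 1) (n - 2)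
      - xsj ι n (s + (PD ι n (n - 1) : ℤ) + 1) (n - 1)
      - xsj ι n (s + (PD ι n n : ℤ) + 1) n
  else
    xsj ι n (s + (PD ι n (2 * n - e) : ℤ) + (n : ℤ) - ((2 * n + 1 - e : ℕ) : ℤ)) (2 * n - e)
      - xsj ι n (s + (PD ι n (2 * n + 1 - e) : ℤ) + (n : ℤ) - ((2 * n + 1 - e : ℕ) : ℤ))
          (2 * n + 1 - e)

/-- The column tableau `[j_1,…,j_k]_s = Σ_{i=1}^k box_{s+k-i}(j_i)`. -/
def tab (box : ℤ → ℕ → ℕ → ℚ) (s : ℤ) (k : ℕ) (j : ℕ → ℕ) : ℕ → ℚ :=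
  ∑ i ∈ Finset.Icc 1 k, box (s + (k : ℤ) - (i : ℤ)) (j i)

/-- The set `Tab_{A,ι}`. -/
def TabA (ι : ℕ → ℕ) (n : ℕ) : Set (ℕ → ℚ) :=
  { T | ∃ (k : ℕ) (s : ℤ) (j : ℕ → ℕ),
      1 ≤ k ∧ k ≤ n ∧
      (∀ i, 1 ≤ i → i ≤ k → 1 ≤ j i ∧ j i ≤ n + 1) ∧
      (∀ i, 1 ≤ i → i < k → j i < j (i + 1)) ∧
      1 - (PABC ι n k : ℤ) ≤ s ∧
      T = tab (boxA ι n) s k j }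

/-- `|·|` on encoded entries of `J_B = J_C`. -/
def absJ (n e : ℕ) : ℕ := if e ≤ n then e else 2 * n + 1 - e

/-- The set `Tab_{B,ι}`. -/
def TabB (ι : ℕ → ℕ) (n : ℕ) : Set (ℕ → ℚ) :=
  { T | ∃ (k : ℕ) (s : ℤ) (j : ℕ → ℕ),
      1 ≤ k ∧ k ≤ n ∧
      (∀ i, 1 ≤ i → i ≤ k → 1 ≤ j i ∧ j i ≤ 2 * n) ∧
      (∀ i, 1 ≤ i → i < k → j i < j (i + 1)) ∧
      (k = n → ∀ l m, 1 ≤ l → l < m → m ≤ k → absJ n (j l) ≠ absJ n (j m)) ∧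
      1 - (PABC ι n k : ℤ) ≤ s ∧
      T = tab (boxB ι n) s k j }

/-- Defining conditions of `Tab_{C,ι}` on the data `(k,s,j)`. -/
def TabCcond (ι : ℕ → ℕ) (n : ℕ) (k : ℕ) (s : ℤ) (j : ℕ → ℕ) : Prop :=
  (1 ≤ k ∧ k ≤ n - 1 ∧
    (∀ i, 1 ≤ i → i ≤ k → 1 ≤ j i ∧ j i ≤ 2 * n) ∧
    (∀ i, 1 ≤ i → i < k → j i < j (i + 1)) ∧
    1 - (PABC ι n k : ℤ) ≤ s)
  ∨
  (j 1 = 0 ∧ 1 ≤ k ∧ k ≤ n + 1 ∧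
    (∀ i, 2 ≤ i → i ≤ k → n + 1 ≤ j i ∧ j i ≤ 2 * n) ∧
    (∀ i, 2 ≤ i → i < k → j i < j (i + 1)) ∧
    1 - (PABC ι n n : ℤ) ≤ s)

/-- The set `Tab_{C,ι}`. -/
def TabC (ι : ℕ → ℕ) (n : ℕ) : Set (ℕ → ℚ) :=
  { T | ∃ k s j, TabCcond ι n k s j ∧ T = tab (boxC ι n) s k j }

/-- The partial order on (encoded) `J_D`: `a ≤ b` iff `a = b`, or `a < b` numerically and
`(a,b)` is not the incomparable pair `(n, n̄)`. -/
def leD (n a b : ℕ) : Prop := a = b ∨ (a < b ∧ ¬(a = n ∧ b = n + 1))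

/-- Defining conditions of `Tab_{D,ι}` on the data `(k,s,j)`. -/
def TabDcond (ι : ℕ → ℕ) (n : ℕ) (k : ℕ) (s : ℤ) (j : ℕ → ℕ) : Prop :=
  (1 ≤ k ∧ k ≤ n - 2 ∧
    (∀ i, 1 ≤ i → i ≤ k → 1 ≤ j i ∧ j i ≤ 2 * n) ∧
    (∀ i, 1 ≤ i → i < k → ¬ leD n (j (i + 1)) (j i)) ∧
    1 - (PD ι n k : ℤ) ≤ s)
  ∨
  (j 1 = 0 ∧ 1 ≤ k ∧ k ≤ n + 1 ∧
    (∀ i, 2 ≤ i → i ≤ k → n + 1 ≤ j i ∧ j i ≤ 2 * n) ∧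
    (∀ i, 2 ≤ i → i < k → j i < j (i + 1)) ∧
    (k % 2 = 0 → 1 - (PD ι n (n - 1) : ℤ) ≤ s) ∧
    (k % 2 = 1 → 1 - (PD ι n n : ℤ) ≤ s))

/-- The set `Tab_{D,ι}`. -/
def TabD (ι : ℕ → ℕ) (n : ℕ) : Set (ℕ → ℚ) :=
  { T | ∃ k s j, TabDcond ι n k s j ∧ T = tab (boxD ι n) s k j }

end

section helpers

lemma occ_ne {n : ℕ} {ι : ℕ → ℕ} (h : Admissible n ι) {i : ℕ} (h1 : 1 ≤ i) (h2 : i ≤ n) (N : ℕ) :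
    {k | N < k ∧ ι k = i}.Nonempty := by
  obtain ⟨k, hk, hk'⟩ := h.2.2 i h1 h2 (N + 1)
  exact ⟨k, hk, hk'⟩

lemma occ_spec {n : ℕ} {ι : ℕ → ℕ} (h : Admissible n ι) {i : ℕ} (h1 : 1 ≤ i) (h2 : i ≤ n) (s : ℕ) :
    occPos ι i s < occPos ι i (s + 1) ∧ ι (occPos ι i (s + 1)) = i :=
  Nat.sInf_mem (occ_ne h h1 h2 (occPos ι i s))

lemma occ_le {ι : ℕ → ℕ} {i s k : ℕ} (h : occPos ι i s < k) (hk : ι k = i) :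
    occPos ι i (s + 1) ≤ k :=
  Nat.sInf_le (show k ∈ {k | occPos ι i s < k ∧ ι k = i} from ⟨h, hk⟩)

lemma firstOcc_eq (ι : ℕ → ℕ) (i : ℕ) : firstOcc ι i = occPos ι i 1 := rfl

lemma between {n : ℕ} {ι : ℕ → ℕ} (h : Admissible n ι)
    (ha : Adapted n (cartanC n) ι) {i j : ℕ} (h1 : 1 ≤ i) (h2 : i ≤ n) (h3 : 1 ≤ j) (h4 : j ≤ n)
    (hij : i + 1 = j ∨ j + 1 = i) (s : ℕ) :
    ∃ k, occPos ι i (s + 1) < k ∧ k < occPos ι i (s + 2) ∧ ι k = j := by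
  by_contra hc
  push Not at hc
  have a := occ_spec h h1 h2 s
  have b := occ_spec h h1 h2 (s + 1)
  have hA : cartanC n i j ≠ 0 := by
    unfold cartanC
    split_ifs <;> simp
  refine ha i j h1 h2 h3 h4 (by omega) hA (occPos ι i (s + 1)) (occPos ι i (s + 2)) (by omega) b.1
    (Or.inl a.2) (Or.inl b.2) ?_ (a.2.trans b.2.symm)
  intro m hm hm'
  refine ⟨fun e => ?_, hc m hm hm'⟩
  have := occ_le hm e
  exact absurd hm' (not_lt.mpr this)

lemma interl {n : ℕ} {ι : ℕ → ℕ} (h : Admissible n ι)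
    (ha : Adapted n (cartanC n) ι) {i j : ℕ} (h1 : 1 ≤ i) (h2 : i ≤ n) (h3 : 1 ≤ j) (h4 : j ≤ n)
    (hij : i + 1 = j ∨ j + 1 = i) (hf : firstOcc ι i < firstOcc ι j) (m : ℕ) :
    occPos ι i (m + 1) < occPos ι j (m + 1) ∧ occPos ι j (m + 1) < occPos ι i (m + 2) := by
  induction m with
  | zero =>
    refine ⟨hf, ?_⟩
    obtain ⟨k, a, b, c⟩ := between h ha h1 h2 h3 h4 hij 0
    have := occ_le (s := 0) (i := j) (show 0 < k by omega) c
    exact lt_of_le_of_lt this b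
  | succ m ih =>
    have X : occPos ι i (m + 2) < occPos ι j (m + 2) := by
      obtain ⟨k, a, b, c⟩ := between h ha h3 h4 h1 h2 hij.symm m
      have := occ_le (s := m + 1) (i := i) (by omega) c
      exact lt_of_le_of_lt this b
    refine ⟨X, ?_⟩
    obtain ⟨k, a, b, c⟩ := between h ha h1 h2 h3 h4 hij (m + 1)
    have := occ_le (s := m + 1) (i := j) (lt_trans ih.2 a) c
    exact lt_of_le_of_lt this b

lemma firstOcc_ne {n : ℕ} {ι : ℕ → ℕ} (h : Admissible n ι) {i j : ℕ} (h1 : 1 ≤ i) (h2 : i ≤ n)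
    (h3 : 1 ≤ j) (h4 : j ≤ n) (hij : i ≠ j) : firstOcc ι i ≠ firstOcc ι j := by
  intro e
  have a := (occ_spec h h1 h2 0).2
  have b := (occ_spec h h3 h4 0).2
  rw [firstOcc_eq, firstOcc_eq] at e
  simp only [zero_add] at a b
  rw [e] at a
  exact hij (a.symm.trans b)

/-- positions of the neighbour letter `j` between consecutive occurrences of `i` -/
lemma nb_iff {n : ℕ} {ι : ℕ → ℕ} (h : Admissible n ι)
    (ha : Adapted n (cartanC n) ι) {i j : ℕ} (h1 : 1 ≤ i) (h2 : i ≤ n) (h3 : 1 ≤ j) (h4 : j ≤ n)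
    (hij : i + 1 = j ∨ j + 1 = i) (m l : ℕ) :
    l = occPos ι j (m + 1 + pval ι j i) ↔
      (occPos ι i (m + 1) < l ∧ l < occPos ι i (m + 2) ∧ ι l = j) := by
  have hne := firstOcc_ne h h1 h2 h3 h4 (by omega)
  unfold pval
  split_ifs with hp
  · have a := interl h ha h3 h4 h1 h2 hij.symm hp m
    have b := interl h ha h3 h4 h1 h2 hij.symm hp (m + 1)
    have c := occ_spec h h3 h4 (m + 1)
    constructor
    · rintro rfl
      exact ⟨a.2, b.1, c.2⟩
    · rintro ⟨x, y, z⟩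
      have u := occ_le (s := m + 1) (lt_trans a.1 x) z
      by_contra hc
      have v := occ_le (s := m + 2) (lt_of_le_of_ne u (Ne.symm hc)) z
      have w := b.2
      have : m + 1 + 2 = m + 2 + 1 := rfl
      rw [this] at w
      have : m + 1 + 1 = m + 2 := rfl
      rw [this] at w
      omega
  · have hp' : firstOcc ι i < firstOcc ι j := by omega
    have a := interl h ha h1 h2 h3 h4 hij hp' m
    have b := interl h ha h1 h2 h3 h4 hij hp' (m + 1)
    have c := occ_spec h h3 h4 m
    constructor
    · rintro rfl
      exact ⟨a.1, a.2, c.2⟩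
    · rintro ⟨x, y, z⟩
      have w : occPos ι j m < l := by
        cases m with
        | zero => exact lt_of_le_of_lt (Nat.zero_le _) x
        | succ m =>
          have := (interl h ha h1 h2 h3 h4 hij hp' m).2
          exact lt_trans this x
      have u := occ_le w z
      by_contra hc
      have v := occ_le (s := m + 1) (lt_of_le_of_ne u (Ne.symm hc)) z
      have w := lt_of_lt_of_le b.1 v
      have : m + 1 + 1 = m + 2 := rfl
      rw [this] at w
      omega

lemma nb_xsj {n : ℕ} {ι : ℕ → ℕ} (h : Admissible n ι)
    (ha : Adapted n (cartanC n) ι) {i j : ℕ} (h1 : 1 ≤ i) (h2 : i ≤ n)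
    (hij : i + 1 = j ∨ j + 1 = i) (m l : ℕ) :
    xsj ι n ((m + 1 + pval ι j i : ℕ) : ℤ) j l =
      if (occPos ι i (m + 1) < l ∧ l < occPos ι i (m + 2) ∧ ι l = j) then 1 else 0 := by
  unfold xsj
  by_cases hj : 1 ≤ j ∧ j ≤ n
  · rw [if_pos ⟨by push_cast; omega, hj⟩, Int.toNat_natCast]
    unfold xc
    simp only [nb_iff h ha h1 h2 hj.1 hj.2 hij m l]
  · rw [if_neg (by tauto), if_neg]
    · rfl
    · rintro ⟨a, b, c⟩
      have := h.1 l (by omega)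
      omega

lemma xsj_zero (ι : ℕ → ℕ) (n : ℕ) (s : ℤ) : xsj ι n s 0 = 0 := by
  unfold xsj; rw [if_neg (by omega)]

lemma xsj_top (ι : ℕ → ℕ) (n : ℕ) (s : ℤ) : xsj ι n s (n + 1) = 0 := by
  unfold xsj; rw [if_neg (by omega)]

lemma beta_eq0 {n : ℕ} {ι : ℕ → ℕ} (h : Admissible n ι)
    (ha : Adapted n (cartanC n) ι) {j : ℕ} (h1 : 1 ≤ j) (h2 : j ≤ n) (m : ℕ) :
    beta (cartanC n) ι (occPos ι j (m + 1)) =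
      xsj ι n ((m + 1 : ℕ) : ℤ) j + xsj ι n ((m + 2 : ℕ) : ℤ) j
      + (cartanC n j (j - 1) : ℚ) • xsj ι n ((m + 1 + pval ι (j - 1) j : ℕ) : ℤ) (j - 1)
      + (cartanC n j (j + 1) : ℚ) • xsj ι n ((m + 1 + pval ι (j + 1) j : ℕ) : ℤ) (j + 1) := by
  have a := occ_spec h h1 h2 m
  have b := occ_spec h h1 h2 (m + 1)
  have hk : kplus ι (occPos ι j (m + 1)) = occPos ι j (m + 2) := by
    unfold kplus
    rw [a.2]
    rfl
  unfold beta
  rw [if_neg (by omega), hk, a.2]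
  have e1 : xsj ι n ((m + 1 : ℕ) : ℤ) j = xc (occPos ι j (m + 1)) := by
    unfold xsj
    rw [if_pos ⟨by push_cast; omega, h1, h2⟩, Int.toNat_natCast]
  have e2 : xsj ι n ((m + 2 : ℕ) : ℤ) j = xc (occPos ι j (m + 2)) := by
    unfold xsj
    rw [if_pos ⟨by push_cast; omega, h1, h2⟩, Int.toNat_natCast]
  rw [e1, e2]
  suffices hs : (∑ k ∈ Finset.Ioo (occPos ι j (m + 1)) (occPos ι j (m + 2)),
      (cartanC n j (ι k) : ℚ) • xc k) =
      (cartanC n j (j - 1) : ℚ) • xsj ι n ((m + 1 + pval ι (j - 1) j : ℕ) : ℤ) (j - 1)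
      + (cartanC n j (j + 1) : ℚ) • xsj ι n ((m + 1 + pval ι (j + 1) j : ℕ) : ℤ) (j + 1) by
    rw [hs]; abel
  funext l
  simp only [Finset.sum_apply, Pi.add_apply, Pi.smul_apply, smul_eq_mul]
  rw [nb_xsj h ha h1 h2 (by omega), nb_xsj h ha h1 h2 (by omega)]
  simp only [xc, mul_ite, mul_one, mul_zero, Finset.sum_ite_eq, Finset.mem_Ioo]
  by_cases hl : occPos ι j (m + 1) < l ∧ l < occPos ι j (m + 2)
  · have hlj : ι l ≠ j := by
      intro e
      have := occ_le hl.1 e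
      have h' : m + 1 + 1 = m + 2 := rfl
      rw [h'] at this
      omega
    rw [if_pos hl]
    by_cases c1 : ι l = j - 1
    · rw [if_pos ⟨hl.1, hl.2, c1⟩, if_neg (by omega), c1, add_zero]
    · by_cases c2 : ι l = j + 1
      · rw [if_neg (by tauto), if_pos ⟨hl.1, hl.2, c2⟩, c2, zero_add]
      · rw [if_neg (by tauto), if_neg (by tauto)]
        have : cartanC n j (ι l) = 0 := by
          have := h.1 l (by omega)
          unfold cartanC
          rw [if_neg (by omega), if_neg (by omega), if_neg (by omega)]
        simp [this]
  · rw [if_neg hl, if_neg (by tauto), if_neg (by tauto), add_zero]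

lemma PABC_succ (ι : ℕ → ℕ) {n j : ℕ} (h1 : 1 ≤ j) (h2 : j + 1 ≤ n) :
    PABC ι n (j + 1) = PABC ι n j + pval ι (j + 1) j := by
  unfold PABC
  rw [if_pos h2, if_pos (by omega), Finset.sum_Icc_succ_top (by omega)]
  rfl

lemma beta_eq {n : ℕ} {ι : ℕ → ℕ} (h : Admissible n ι)
    (ha : Adapted n (cartanC n) ι) {j : ℕ} (h1 : 1 ≤ j) (h2 : j ≤ n) (m : ℤ) (hm : 1 ≤ m) :
    betasj (cartanC n) ι m j =
      xsj ι n m j + xsj ι n (m + 1) j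
      + (cartanC n j (j - 1) : ℚ) • xsj ι n (m + 1 + PABC ι n (j - 1) - PABC ι n j) (j - 1)
      + (cartanC n j (j + 1) : ℚ) • xsj ι n (m + PABC ι n (j + 1) - PABC ι n j) (j + 1) := by
  obtain ⟨k, rfl⟩ : ∃ k : ℕ, m = ((k + 1 : ℕ) : ℤ) := ⟨(m - 1).toNat, by omega⟩
  unfold betasj
  rw [Int.toNat_natCast, beta_eq0 h ha h1 h2]
  congr 1
  · congr 1
    rcases Nat.lt_or_ge 1 j with hj | hj
    · congr 2
      obtain ⟨i, rfl⟩ : ∃ i, j = i + 1 := ⟨j - 1, by omega⟩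
      rw [Nat.add_sub_cancel, PABC_succ ι (by omega) h2]
      have := firstOcc_ne h (i := i) (j := i + 1) (by omega) (by omega) h1 h2 (by omega)
      unfold pval
      split_ifs <;> push_cast <;> omega
    · obtain rfl : j = 1 := by omega
      simp [xsj_zero]
  · rcases Nat.lt_or_ge j n with hj | hj
    · congr 2
      rw [PABC_succ ι h1 hj]
      push_cast
      ring
    · obtain rfl : j = n := by omega
      simp [xsj_top]

lemma cC1 {n j : ℕ} (h : 1 ≤ j) (hj : j ≤ n) : cartanC n j (j - 1) = -1 := by
  unfold cartanC
  rw [if_neg (by omega), if_neg (by omega), if_pos (by omega)]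

lemma cC2 {n j : ℕ} (hj : j + 1 < n) : cartanC n j (j + 1) = -1 := by
  unfold cartanC
  rw [if_neg (by omega), if_neg (by omega), if_pos (by omega)]

lemma cC3 {n j : ℕ} (hj : j + 1 = n) : cartanC n j (j + 1) = -2 := by
  unfold cartanC
  rw [if_neg (by omega), if_pos (by omega)]

end helpers

/-- Lemma 3.3 (iii): the type C box relations (barred entries `j̄` are encoded as `2n+1-j`,
and `ovl(n+1)` as `0`). -/
theorem boxC_rel (n : ℕ) (hn : 2 ≤ n) (ι : ℕ → ℕ)
    (hadm : Admissible n ι) (hadap : Adapted n (cartanC n) ι) :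
    (∀ (j : ℕ) (s : ℤ), 1 ≤ j → j ≤ n - 1 → 1 - (PABC ι n j : ℤ) ≤ s →
      boxC ι n s (j + 1) =
        boxC ι n s j - betasj (cartanC n) ι (s + (PABC ι n j : ℤ)) j) ∧
    (∀ s : ℤ, 1 - (PABC ι n n : ℤ) ≤ s →
      boxC ι n s (n + 1) =
        boxC ι n s n - (2 : ℚ) • betasj (cartanC n) ι (s + (PABC ι n n : ℤ)) n) ∧
    (∀ (j : ℕ) (s : ℤ), 2 ≤ j → j ≤ n → (j : ℤ) - (PABC ι n (j - 1) : ℤ) - (n : ℤ) ≤ s →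
      boxC ι n s (2 * n + 2 - j) =
        boxC ι n s (2 * n + 1 - j)
          - betasj (cartanC n) ι
              (s + (PABC ι n (j - 1) : ℤ) + (n : ℤ) - (j : ℤ) + 1) (j - 1)) ∧
    (∀ l : ℤ, 1 - (PABC ι n n : ℤ) ≤ l →
      boxC ι n (l + 1) 0 + boxC ι n l (n + 1) =
        boxC ι n l 0 - betasj (cartanC n) ι (l + (PABC ι n n : ℤ)) n) := by
  refine ⟨?_, ?_, ?_, ?_⟩
  · intro j s h1 h2 hs
    rw [beta_eq hadm hadap h1 (by omega) _ (by omega), cC1 h1 (by omega)]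
    have e1 : s + (PABC ι n j : ℤ) + 1 + PABC ι n (j - 1) - PABC ι n j
      = s + PABC ι n (j - 1) + 1 := by ring
    have e2 : s + (PABC ι n j : ℤ) + PABC ι n (j + 1) - PABC ι n j
      = s + PABC ι n (j + 1) := by ring
    rw [e1, e2]
    unfold boxC
    rcases Nat.lt_or_ge (j + 1) n with hj | hj
    · rw [cC2 hj, if_neg (by omega), if_pos hj, if_neg (by omega), if_pos (by omega),
        Nat.add_sub_cancel]
      push_cast
      module
    · obtain rfl : n = j + 1 := by omega
      rw [cC3 rfl, if_neg (by omega), if_neg (by omega), if_pos rfl, if_neg (by omega),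
        if_pos (by omega), Nat.add_sub_cancel]
      push_cast
      module
  · intro s hs
    rw [beta_eq hadm hadap (by omega) le_rfl _ (by omega), cC1 (by omega) le_rfl, xsj_top]
    have e1 : s + (PABC ι n n : ℤ) + 1 + PABC ι n (n - 1) - PABC ι n n
      = s + PABC ι n (n - 1) + 1 := by ring
    rw [e1]
    unfold boxC
    rw [if_neg (by omega), if_neg (by omega), if_neg (by omega), if_pos rfl, if_neg (by omega),
      if_neg (by omega), if_pos rfl]
    push_cast
    module
  · intro j s h1 h2 hs
    obtain ⟨i, rfl⟩ : ∃ i, j = i + 1 := ⟨j - 1, by omega⟩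
    rw [Nat.add_sub_cancel] at hs ⊢
    rw [beta_eq hadm hadap (by omega) (by omega) _ (by push_cast at hs ⊢; omega),
      cC1 (by omega) (by omega)]
    unfold boxC
    rw [if_neg (by omega), if_neg (by omega), if_neg (by omega), if_neg (by omega),
      if_neg (by omega), if_neg (by omega), if_neg (by omega)]
    have a1 : 2 * n - (2 * n + 2 - (i + 1)) = i - 1 := by omega
    have a2 : 2 * n + 1 - (2 * n + 2 - (i + 1)) = i := by omega
    have a3 : 2 * n - (2 * n + 1 - (i + 1)) = i := by omega
    have a4 : 2 * n + 1 - (2 * n + 1 - (i + 1)) = i + 1 := by omega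
    rw [a1, a2, a3, a4]
    have e1 : s + (PABC ι n i : ℤ) + n - ((i + 1 : ℕ) : ℤ) + 1 + 1 + PABC ι n (i - 1) - PABC ι n i
      = s + PABC ι n (i - 1) + n - i + 1 := by push_cast; ring
    have e2 : s + (PABC ι n i : ℤ) + n - ((i + 1 : ℕ) : ℤ) + 1 + PABC ι n (i + 1) - PABC ι n i
      = s + PABC ι n (i + 1) + n - ((i + 1 : ℕ) : ℤ) + 1 := by ring
    have e3 : s + (PABC ι n i : ℤ) + n - ((i + 1 : ℕ) : ℤ) + 1 + 1
      = s + PABC ι n i + n - i + 1 := by push_cast; ring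
    rw [e1, e2, e3]
    rcases Nat.lt_or_ge (i + 1) n with hj | hj
    · rw [cC2 hj, if_neg (by omega)]
      push_cast
      module
    · obtain rfl : n = i + 1 := by omega
      rw [cC3 rfl, if_pos (by omega), Nat.add_sub_cancel]
      have e4 : s + (PABC ι (i + 1) i : ℤ) + ((i + 1 : ℕ) : ℤ) - ((i + 1 : ℕ) : ℤ) + 1
        = s + PABC ι (i + 1) i + 1 := by ring
      have e5 : s + (PABC ι (i + 1) (i + 1) : ℤ) + ((i + 1 : ℕ) : ℤ) - ((i + 1 : ℕ) : ℤ) + 1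
        = s + PABC ι (i + 1) (i + 1) + 1 := by ring
      rw [e4, e5]
      push_cast
      module
  · intro s hs
    rw [beta_eq hadm hadap (by omega) le_rfl _ (by omega), cC1 (by omega) le_rfl, xsj_top]
    have e1 : s + (PABC ι n n : ℤ) + 1 + PABC ι n (n - 1) - PABC ι n n
      = s + PABC ι n (n - 1) + 1 := by ring
    have e2 : s + 1 + (PABC ι n n : ℤ) = s + PABC ι n n + 1 := by ring
    unfold boxC
    rw [e1, if_pos rfl, if_neg (by omega), if_neg (by omega), if_neg (by omega), if_pos rfl,
      if_pos rfl, e2]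
    push_cast
    module
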